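/- Let G be a connected bipartite graph with at least 3 vertices. Then H_G = [1,∞), [2,∞) ⊆ H_G^φ ⊆ [1,∞), and {1} ∪ [3,∞) ⊆ H_G^ψ ⊆ [1,∞). If moreover K_{2,2} ⊆ G ⊆ K_{2,m} for some m ≥ 2 (i.e., G is bipartite with one part of size 2, G is a subgraph of the complete bipartite graph K_{2,m} on these parts, and G contains a copy of K_{2,2}), then H_G^φ = [2,∞) and {1} ∪ [2,∞) ⊆ H_G^ψ ⊆ [1,∞). -/

import Mathlib

open Set Matrix

noncomputable section

/-- Entrywise power function `x ↦ x^α` on nonnegative reals, with the convention `0^α := 0`. -/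
def powEnt (α x : ℝ) : ℝ := if x = 0 then 0 else x ^ α

/-- The odd extension `ψ_α(x) = sgn(x)|x|^α` of the power function, with `ψ_α(0) = 0`. -/
def psiF (α x : ℝ) : ℝ := Real.sign x * |x| ^ α

/-- The even extension `φ_α(x) = |x|^α` of the power function, with `φ_α(0) = 0`. -/
def phiF (α x : ℝ) : ℝ := if x = 0 then 0 else |x| ^ α

/-- `P_G(I)`: positive semidefinite matrices with entries in `I` and zeros outside
the edge pattern of `G`. -/
def PsetG {V : Type*} [Fintype V] (G : SimpleGraph V) (I : Set ℝ) :
    Set (Matrix V V ℝ) :=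
  {A | A.PosSemidef ∧ (∀ i j, A i j ∈ I) ∧ ∀ i j, i ≠ j → ¬ G.Adj i j → A i j = 0}

/-- `H_G`: the set of entrywise powers preserving `P_G([0,∞))`. -/
def HsetG {V : Type*} [Fintype V] (G : SimpleGraph V) : Set ℝ :=
  {α | ∀ A ∈ PsetG G (Ici (0 : ℝ)), A.map (powEnt α) ∈ PsetG G univ}

/-- `H_G^ψ`: the set of powers `α` such that `ψ_α` preserves `P_G(ℝ)`. -/
def HsetPsi {V : Type*} [Fintype V] (G : SimpleGraph V) : Set ℝ :=
  {α | ∀ A ∈ PsetG G univ, A.map (psiF α) ∈ PsetG G univ}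

/-- `H_G^φ`: the set of powers `α` such that `φ_α` preserves `P_G(ℝ)`. -/
def HsetPhi {V : Type*} [Fintype V] (G : SimpleGraph V) : Set ℝ :=
  {α | ∀ A ∈ PsetG G univ, A.map (phiF α) ∈ PsetG G univ}

/-- The set of which the critical exponent is the least element:
all `α` such that every `β ≥ α` lies in `H`. -/
def CEset (H : Set ℝ) : Set ℝ := {α | ∀ β, α ≤ β → β ∈ H}

/-- The positive integers, as a set of reals. -/
def posNats : Set ℝ := {x | ∃ k : ℕ, 0 < k ∧ x = k}

/-- The odd positive integers `−1+2ℕ`, as a set of reals. -/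
def oddNats : Set ℝ := {x | ∃ k : ℕ, 0 < k ∧ x = 2 * k - 1}

/-- The even positive integers `2ℕ`, as a set of reals. -/
def evenNats : Set ℝ := {x | ∃ k : ℕ, 0 < k ∧ x = 2 * k}

/-! Flipping signs on one side of a bipartition negates every off-diagonal entry of a positive
semidefinite matrix with that pattern, so positivity survives any change of off-diagonal signs and
any decrease of off-diagonal absolute values. For `α ≥ 1` and nonnegative `A`, write `a_ij ^ α =
a_ij ^ (α - 1) * a_ij` and bound the first factor by `(√a_ii * √a_jj) ^ (α - 1)`: the `α`-th powers,
with arbitrary signs off the diagonal, are dominated by a diagonal congruence of `A`, with equality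
on the diagonal. If `A` has negative entries, this applies to `A ⊙ A` and `α / 2`, which is where
the bound `2` comes from.

Conversely, a preserver for `G` is a preserver for every subgraph, and one matrix on the path with
three vertices forces `2 ≤ 2 ^ α`, while one on the four-cycle forces `4 ≤ 2 ^ α` for `φ_α`. -/

open scoped SimpleGraph

section Comparison

variable {V : Type*}

lemma abs_apply_le_sqrt_mul_sqrt {A : Matrix V V ℝ} (hA : A.PosSemidef) (i j : V) :
    |A i j| ≤ √(A i i) * √(A j j) := by
  have hsymm : A j i = A i j := hA.1.apply i j
  have hdet := (hA.submatrix ![i, j]).det_nonneg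
  simp only [det_fin_two, submatrix_apply, cons_val_zero, cons_val_one, hsymm] at hdet
  rw [← Real.sqrt_mul hA.diag_nonneg]
  exact Real.abs_le_sqrt (by linarith)

lemma posSemidef_of_abs_le_neg {B M : Matrix V V ℝ} (hB : B.PosSemidef) (hM : M.IsHermitian)
    (hdiag : ∀ i, B i i ≤ M i i) (hoff : ∀ i j, i ≠ j → |M i j| ≤ -B i j) : M.PosSemidef := by
  refine ⟨hM, fun x => (hB.2 (x.mapRange abs abs_zero)).trans ?_⟩
  simp only [Finsupp.sum_mapRange_index, star_trivial, zero_mul, mul_zero, Finsupp.sum_fun_zero,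
    implies_true]
  refine Finset.sum_le_sum fun i _ => Finset.sum_le_sum fun j _ => ?_
  obtain rfl | hij := eq_or_ne i j
  · calc |x i| * B i i * |x i| = B i i * x i ^ 2 := by rw [← sq_abs]; ring
      _ ≤ M i i * x i ^ 2 := by gcongr; exact hdiag i
      _ = x i * M i i * x i := by ring
  · calc |x i| * B i j * |x j| = -(|x i| * -B i j * |x j|) := by ring
      _ ≤ -(|x i| * |M i j| * |x j|) := by gcongr; exact hoff i j hij
      _ = -|x i * M i j * x j| := by simp only [abs_mul]
      _ ≤ x i * M i j * x j := neg_abs_le _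

end Comparison

section Bipartite

variable {V : Type*} {G : SimpleGraph V}

lemma exists_sign_of_colorable_two (R : Type*) [Ring R] (hG : G.Colorable 2) :
    ∃ s : V → R, (∀ i, s i * s i = 1) ∧ ∀ i j, G.Adj i j → s i * s j = -1 := by
  obtain ⟨c⟩ := hG
  refine ⟨fun i => if c i = 0 then 1 else -1, fun i => ?_, fun i j hij => ?_⟩
  · by_cases hi : c i = 0 <;> simp [hi]
  · have hne := c.valid hij
    by_cases hi : c i = 0 <;> by_cases hj : c j = 0 <;> first | omega | simp [hi, hj]

variable [Fintype V] {I : Set ℝ} {A M : Matrix V V ℝ} {α : ℝ}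

lemma posSemidef_of_abs_le_mul_of_colorable_two (hG : G.Colorable 2) (hA : A ∈ PsetG G I)
    (hM : M.IsHermitian) (w : V → ℝ) (hdiag : ∀ i, w i * w i * A i i ≤ M i i)
    (hoff : ∀ i j, i ≠ j → |M i j| ≤ w i * w j * A i j) : M.PosSemidef := by
  obtain ⟨s, hs, hsadj⟩ := exists_sign_of_colorable_two ℝ hG
  let d : V → ℝ := fun i => s i * w i
  have hd : (vecMulVec d d).PosSemidef := by simpa using posSemidef_vecMulVec_self_star d
  refine posSemidef_of_abs_le_neg (hd.hadamard hA.1) hM (fun i => ?_) fun i j hij => ?_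
  · calc d i * d i * A i i = (s i * s i) * (w i * w i * A i i) := by ring
      _ ≤ M i i := by rw [hs, one_mul]; exact hdiag i
  · have hflip : s i * s j * A i j = -A i j := by
      by_cases hadj : G.Adj i j
      · rw [hsadj i j hadj, neg_one_mul]
      · simp [hA.2.2 i j hij hadj]
    calc |M i j| ≤ w i * w j * A i j := hoff i j hij
      _ = -(d i * d j * A i j) := by linear_combination (w i * w j) * hflip

lemma posSemidef_of_abs_le_rpow_of_colorable_two (hG : G.Colorable 2) (hα : 1 ≤ α)
    (hA : A ∈ PsetG G (Ici 0)) (hM : M.IsHermitian) (hdiag : ∀ i, A i i ^ α ≤ M i i)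
    (hoff : ∀ i j, i ≠ j → |M i j| ≤ A i j ^ α) : M.PosSemidef := by
  have hnonneg : ∀ i j, 0 ≤ A i j := hA.2.1
  have rpow_eq (i j : V) : A i j ^ α = A i j ^ (α - 1) * A i j := by
    rw [← Real.rpow_add_one' (hnonneg i j) (by linarith), sub_add_cancel]
  refine posSemidef_of_abs_le_mul_of_colorable_two hG hA hM (fun i => √(A i i) ^ (α - 1))
    (fun i => ?_) fun i j hij => ?_
  · rw [← Real.mul_rpow (by positivity) (by positivity), Real.mul_self_sqrt (hnonneg i i),
      ← rpow_eq]
    exact hdiag i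
  · calc |M i j| ≤ A i j ^ (α - 1) * A i j := (hoff i j hij).trans_eq (rpow_eq i j)
      _ ≤ (√(A i i) * √(A j j)) ^ (α - 1) * A i j := by
        gcongr ?_ ^ _ * _
        · exact hnonneg i j
        · exact hnonneg i j
        · exact (le_abs_self _).trans (abs_apply_le_sqrt_mul_sqrt hA.1 i j)
      _ = √(A i i) ^ (α - 1) * √(A j j) ^ (α - 1) * A i j := by
        rw [Real.mul_rpow (by positivity) (by positivity)]

lemma hadamard_self_mem_PsetG (hA : A ∈ PsetG G I) : A ⊙ A ∈ PsetG G (Ici 0) :=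
  ⟨hA.1.hadamard hA.1, fun i j => mul_self_nonneg (A i j), fun i j hij hadj => by
    simp [hA.2.2 i j hij hadj]⟩

end Bipartite

section Preservers

variable {V W : Type*} [Fintype V] [Fintype W] {G : SimpleGraph V} {H : SimpleGraph W}
  {I J : Set ℝ} {f g : ℝ → ℝ} {α : ℝ}

/-- Entrywise application of `f` sends `P_G(I)` to positive semidefinite matrices. The pattern of
zeros of `f[A]` is left out: it is automatic if `f 0 = 0`. -/
def PreservesPosSemidef (G : SimpleGraph V) (I : Set ℝ) (f : ℝ → ℝ) : Prop :=
  ∀ A ∈ PsetG G I, (A.map f).PosSemidef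

lemma PreservesPosSemidef.congr_of_subset (hf : PreservesPosSemidef G J f) (hIJ : I ⊆ J)
    (hfg : EqOn f g I) : PreservesPosSemidef G I g := by
  intro A hA
  have hmap : A.map g = A.map f := by
    ext i j
    exact (hfg (hA.2.1 i j)).symm
  rw [hmap]
  exact hf A ⟨hA.1, fun i j => hIJ (hA.2.1 i j), hA.2.2⟩

lemma forall_map_mem_PsetG_iff (hf : f 0 = 0) :
    (∀ A ∈ PsetG G I, A.map f ∈ PsetG G univ) ↔ PreservesPosSemidef G I f :=
  forall₂_congr fun A hA => ⟨And.left, fun h => ⟨h, fun _ _ => mem_univ _, fun i j hij hadj => by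
    rw [map_apply, hA.2.2 i j hij hadj, hf]⟩⟩

lemma exists_mem_PsetG_submatrix_eq (φ : H.Copy G) (hI : 0 ∈ I) {A : Matrix W W ℝ}
    (hA : A ∈ PsetG H I) : ∃ B ∈ PsetG G I, B.submatrix φ φ = A := by
  classical
  let E : Matrix V W ℝ := (1 : Matrix V V ℝ).submatrix id φ
  have hE : E.submatrix φ id = 1 := by
    rw [submatrix_submatrix]
    exact submatrix_one φ φ.injective
  let B : Matrix V V ℝ := E * A * Eᴴ
  have hBA : B.submatrix φ φ = A := calc
    B.submatrix φ φ = E.submatrix φ id * A * (E.submatrix φ id)ᴴ := rfl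
    _ = A := by rw [hE, Matrix.one_mul, conjTranspose_one, Matrix.mul_one]
  have hB_apply (i j : W) : B (φ i) (φ j) = A i j := congrFun₂ hBA i j
  have hE_zero {v : V} (hv : v ∉ range φ) (i : W) : E v i = 0 :=
    one_apply_ne fun h => hv ⟨i, h.symm⟩
  have hB_support (v w : V) : B v w = 0 ∨ ∃ i j, φ i = v ∧ φ j = w := by
    by_cases hvw : v ∈ range φ ∧ w ∈ range φ
    · obtain ⟨⟨i, hi⟩, j, hj⟩ := hvw
      exact .inr ⟨i, j, hi, hj⟩
    · obtain hv | hw := not_and_or.1 hvw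
      · exact .inl (by simp [B, mul_apply, hE_zero hv])
      · exact .inl (by simp [B, mul_apply, hE_zero hw])
  refine ⟨B, ⟨hA.1.mul_mul_conjTranspose_same E, fun v w => ?_, fun v w hvw hadj => ?_⟩, hBA⟩
  · obtain hzero | ⟨i, j, rfl, rfl⟩ := hB_support v w
    · rwa [hzero]
    · rw [hB_apply]
      exact hA.2.1 i j
  · obtain hzero | ⟨i, j, rfl, rfl⟩ := hB_support v w
    · exact hzero
    · rw [hB_apply]
      exact hA.2.2 i j (ne_of_apply_ne φ hvw) fun h => hadj (φ.toHom.map_adj h)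

lemma PreservesPosSemidef.of_isContained (hf : PreservesPosSemidef G I f) (hHG : H ⊑ G)
    (hI : 0 ∈ I) : PreservesPosSemidef H I f := by
  intro A hA
  obtain ⟨φ⟩ := hHG
  obtain ⟨B, hB, rfl⟩ := exists_mem_PsetG_submatrix_eq φ hI hA
  exact (hf B hB).submatrix φ

lemma preservesPosSemidef_of_two_le (hG : G.Colorable 2) (hα : 2 ≤ α)
    (hf : ∀ x, 0 ≤ x → f x = x ^ α) (hfabs : ∀ x, |f x| ≤ |x| ^ α) :
    PreservesPosSemidef G univ f := by
  intro A hA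
  have rpow_half (x : ℝ) : (x * x) ^ (α / 2) = |x| ^ α := by
    rw [← abs_mul_abs_self, ← sq, ← Real.rpow_natCast_mul (abs_nonneg x)]
    congr 1
    push_cast
    ring
  refine posSemidef_of_abs_le_rpow_of_colorable_two hG (by linarith : 1 ≤ α / 2)
    (hadamard_self_mem_PsetG hA) (hA.1.1.map f fun _ => rfl) (fun i => ?_) fun i j _ => ?_
  · have hdiag : 0 ≤ A i i := hA.1.diag_nonneg
    rw [hadamard_apply, rpow_half, map_apply, hf _ hdiag, abs_of_nonneg hdiag]
  · rw [hadamard_apply, rpow_half]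
    exact hfabs _

end Preservers

section Obstructions

variable {f : ℝ → ℝ}

lemma PreservesPosSemidef.two_mul_le_of_pathGraph
    (hf : PreservesPosSemidef (SimpleGraph.pathGraph 3) (Ici 0) f) (hf0 : f 0 = 0) :
    2 * f 1 ≤ f 2 := by
  let A : Matrix (Fin 3) (Fin 3) ℝ := !![1, 1, 0; 1, 2, 1; 0, 1, 1]
  have hA : A ∈ PsetG (SimpleGraph.pathGraph 3) (Ici 0) := by
    refine ⟨?_, fun i j => ?_, fun i j hij hadj => ?_⟩
    · convert posSemidef_conjTranspose_mul_self !![(1 : ℝ), 1, 0; 0, 1, 1] using 1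
      ext i j
      fin_cases i <;> fin_cases j <;> norm_num [A, mul_apply, Fin.sum_univ_two]
    · fin_cases i <;> fin_cases j <;> norm_num [A]
    · fin_cases i <;> fin_cases j <;> simp_all [A, SimpleGraph.pathGraph_adj]
  let x : Fin 3 → ℝ := ![1, -1, 1]
  have hvalue : x ⬝ᵥ (A.map f *ᵥ x) = f 2 - 2 * f 1 := by
    simp only [x, A, dotProduct, mulVec, Fin.sum_univ_three, map_apply, of_apply, cons_val, hf0]
    ring
  have hform : 0 ≤ x ⬝ᵥ (A.map f *ᵥ x) := (hf A hA).dotProduct_mulVec_nonneg x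
  linarith

lemma PreservesPosSemidef.four_mul_le_of_cycleGraph
    (hf : PreservesPosSemidef (SimpleGraph.cycleGraph 4) univ f) (hf0 : f 0 = 0)
    (hf1 : f (-1) = f 1) : 4 * f 1 ≤ f 2 := by
  let A : Matrix (Fin 4) (Fin 4) ℝ := !![2, 1, 0, 1; 1, 1, 1, 0; 0, 1, 2, -1; 1, 0, -1, 1]
  have hA : A ∈ PsetG (SimpleGraph.cycleGraph 4) univ := by
    refine ⟨?_, fun _ _ => mem_univ _, fun i j hij hadj => ?_⟩
    · convert posSemidef_conjTranspose_mul_self !![(1 : ℝ), 1, 1, 0; 1, 0, -1, 1] using 1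
      ext i j
      fin_cases i <;> fin_cases j <;> norm_num [A, mul_apply, Fin.sum_univ_two]
    · fin_cases i <;> fin_cases j <;>
        first | exact absurd rfl hij | exact absurd (by decide) hadj | rfl
  let x : Fin 4 → ℝ := ![1, -2, 1, -2]
  have hvalue : x ⬝ᵥ (A.map f *ᵥ x) = 2 * (f 2 - 4 * f 1) := by
    simp only [x, A, dotProduct, mulVec, Fin.sum_univ_four, map_apply, of_apply, cons_val, hf0, hf1]
    ring
  have hform : 0 ≤ x ⬝ᵥ (A.map f *ᵥ x) := (hf A hA).dotProduct_mulVec_nonneg x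
  linarith

end Obstructions

section Powers

variable (α : ℝ)

lemma powEnt_zero : powEnt α 0 = 0 := if_pos rfl

lemma phiF_zero : phiF α 0 = 0 := if_pos rfl

lemma psiF_zero : psiF α 0 = 0 := by simp [psiF]

variable {α}

lemma powEnt_eq_rpow (hα : α ≠ 0) (x : ℝ) : powEnt α x = x ^ α := by
  unfold powEnt
  split_ifs with hx
  · rw [hx, Real.zero_rpow hα]
  · rfl

lemma phiF_eq_powEnt_abs (x : ℝ) : phiF α x = powEnt α |x| := by
  simp only [phiF, powEnt, abs_eq_zero]

lemma eqOn_phiF_powEnt : EqOn (phiF α) (powEnt α) (Ici 0) := fun x hx => by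
  rw [phiF_eq_powEnt_abs, abs_of_nonneg hx]

lemma eqOn_psiF_powEnt : EqOn (psiF α) (powEnt α) (Ici 0) := fun x hx => by
  obtain rfl | hpos := (mem_Ici.mp hx).eq_or_lt
  · rw [psiF_zero, powEnt_zero]
  · simp [psiF, powEnt, Real.sign_of_pos hpos, abs_of_pos hpos, hpos.ne']

lemma abs_psiF_le (x : ℝ) : |psiF α x| ≤ |x| ^ α := by
  have hpow : 0 ≤ |x| ^ α := by positivity
  obtain h | h | h := Real.sign_apply_eq x <;> simp [psiF, h, abs_of_nonneg hpow, hpow]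

lemma psiF_one : psiF 1 = id := by
  ext x
  obtain hx | rfl | hx := lt_trichotomy x 0
  · simp [psiF, Real.sign_of_neg hx, abs_of_neg hx]
  · exact psiF_zero 1
  · simp [psiF, Real.sign_of_pos hx, abs_of_pos hx]

end Powers

section PowerSets

variable {V : Type*} [Fintype V] {G : SimpleGraph V} {α : ℝ}

lemma mem_HsetG_iff : α ∈ HsetG G ↔ PreservesPosSemidef G (Ici 0) (powEnt α) :=
  forall_map_mem_PsetG_iff (powEnt_zero α)

lemma mem_HsetPhi_iff : α ∈ HsetPhi G ↔ PreservesPosSemidef G univ (phiF α) :=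
  forall_map_mem_PsetG_iff (phiF_zero α)

lemma mem_HsetPsi_iff : α ∈ HsetPsi G ↔ PreservesPosSemidef G univ (psiF α) :=
  forall_map_mem_PsetG_iff (psiF_zero α)

lemma HsetPhi_subset_HsetG : HsetPhi G ⊆ HsetG G := fun _ hα =>
  mem_HsetG_iff.2 <| (mem_HsetPhi_iff.1 hα).congr_of_subset (subset_univ _) eqOn_phiF_powEnt

lemma HsetPsi_subset_HsetG : HsetPsi G ⊆ HsetG G := fun _ hα =>
  mem_HsetG_iff.2 <| (mem_HsetPsi_iff.1 hα).congr_of_subset (subset_univ _) eqOn_psiF_powEnt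

lemma Ici_one_subset_HsetG (hG : G.Colorable 2) : Ici 1 ⊆ HsetG G := by
  intro α (hα : 1 ≤ α)
  refine mem_HsetG_iff.2 fun A hA => ?_
  have hmap (i j : V) : A.map (powEnt α) i j = A i j ^ α := powEnt_eq_rpow (by linarith) _
  refine posSemidef_of_abs_le_rpow_of_colorable_two hG hα hA (hA.1.1.map _ fun _ => rfl)
    (fun i => (hmap i i).ge) fun i j _ => ?_
  rw [hmap, abs_of_nonneg (Real.rpow_nonneg (hA.2.1 i j) α)]

lemma Ici_two_subset_HsetPhi (hG : G.Colorable 2) : Ici 2 ⊆ HsetPhi G := by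
  intro α (hα : 2 ≤ α)
  have hphi (x : ℝ) : phiF α x = |x| ^ α := by
    rw [phiF_eq_powEnt_abs, powEnt_eq_rpow (by linarith)]
  refine mem_HsetPhi_iff.2 (preservesPosSemidef_of_two_le hG hα (fun x hx => ?_) fun x => ?_)
  · rw [hphi, abs_of_nonneg hx]
  · rw [hphi, abs_of_nonneg (by positivity)]

lemma Ici_two_subset_HsetPsi (hG : G.Colorable 2) : Ici 2 ⊆ HsetPsi G := by
  intro α (hα : 2 ≤ α)
  refine mem_HsetPsi_iff.2 (preservesPosSemidef_of_two_le hG hα (fun x hx => ?_) abs_psiF_le)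
  rw [eqOn_psiF_powEnt hx, powEnt_eq_rpow (by linarith)]

lemma one_mem_HsetPsi : 1 ∈ HsetPsi G :=
  mem_HsetPsi_iff.2 fun A hA => by simpa [psiF_one] using hA.1

lemma HsetG_subset_Ici_one (hG : SimpleGraph.pathGraph 3 ⊑ G) : HsetG G ⊆ Ici 1 := by
  intro α hα
  have htwo : 2 * powEnt α 1 ≤ powEnt α 2 :=
    ((mem_HsetG_iff.1 hα).of_isContained hG self_mem_Ici).two_mul_le_of_pathGraph (powEnt_zero α)
  have hpow : (2 : ℝ) ^ (1 : ℝ) ≤ 2 ^ α := by simpa [powEnt] using htwo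
  exact (Real.rpow_le_rpow_left_iff one_lt_two).1 hpow

lemma HsetPhi_subset_Ici_two (hG : SimpleGraph.cycleGraph 4 ⊑ G) : HsetPhi G ⊆ Ici 2 := by
  intro α hα
  have hfour : 4 * phiF α 1 ≤ phiF α 2 :=
    ((mem_HsetPhi_iff.1 hα).of_isContained hG (mem_univ 0)).four_mul_le_of_cycleGraph
      (phiF_zero α) (by simp [phiF])
  have hpow : (2 : ℝ) ^ (2 : ℝ) ≤ 2 ^ α := calc
    (2 : ℝ) ^ (2 : ℝ) = 4 * phiF α 1 := by norm_num [phiF]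
    _ ≤ phiF α 2 := hfour
    _ = 2 ^ α := by simp [phiF]
  exact (Real.rpow_le_rpow_left_iff one_lt_two).1 hpow

end PowerSets

section Subgraphs

variable {V : Type*} {G : SimpleGraph V}

lemma pathGraph_three_isContained_of_adj {u v w : V} (huw : u ≠ w) (huv : G.Adj u v)
    (hvw : G.Adj v w) : SimpleGraph.pathGraph 3 ⊑ G := by
  refine ⟨⟨⟨![u, v, w], fun {i j} hij => ?_⟩, fun i j hij => ?_⟩⟩
  · fin_cases i <;> fin_cases j <;> simp_all [SimpleGraph.pathGraph_adj, G.adj_comm]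
  · fin_cases i <;> fin_cases j <;> simp_all [huv.ne, hvw.ne, huv.ne', hvw.ne', huw.symm]

lemma cycleGraph_four_isContained_of_adj {a b c d : V} (hac : a ≠ c) (hbd : b ≠ d)
    (hab : G.Adj a b) (hbc : G.Adj b c) (hcd : G.Adj c d) (hda : G.Adj d a) :
    SimpleGraph.cycleGraph 4 ⊑ G := by
  refine ⟨⟨⟨![a, b, c, d], fun {i j} hij => ?_⟩, fun i j hij => ?_⟩⟩
  · fin_cases i <;> fin_cases j <;>
      first | exact absurd hij (by decide) | simp_all [G.adj_comm]
  · fin_cases i <;> fin_cases j <;>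
      simp_all [hab.ne, hbc.ne, hcd.ne, hda.ne, hab.ne', hbc.ne', hcd.ne', hda.ne', hac.symm,
        hbd.symm]

lemma pathGraph_three_isContained_of_connected [Fintype V] (hG : G.Connected)
    (hcard : 3 ≤ Fintype.card V) : SimpleGraph.pathGraph 3 ⊑ G := by
  classical
  obtain ⟨v, hv⟩ : ∃ v, 1 < G.degree v := by
    by_contra! hdeg
    have hsum : ∑ v, G.degree v ≤ Fintype.card V := by
      simpa using Finset.sum_le_sum fun v (_ : v ∈ Finset.univ) => hdeg v
    have hedges := hG.card_vert_le_card_edgeSet_add_one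
    rw [G.sum_degrees_eq_twice_card_edges] at hsum
    rw [Nat.card_eq_fintype_card, Nat.card_eq_fintype_card, ← SimpleGraph.edgeFinset_card]
      at hedges
    omega
  obtain ⟨u, hu, w, hw, huw⟩ := Finset.one_lt_card.1 hv
  rw [SimpleGraph.mem_neighborFinset] at hu hw
  exact pathGraph_three_isContained_of_adj huw hu.symm hw

end Subgraphs

theorem Hsets_bipartite_general {V : Type*} [Fintype V] {G : SimpleGraph V}
    (hbip : G.Colorable 2) (hpath : SimpleGraph.pathGraph 3 ⊑ G) :
    HsetG G = Ici 1 ∧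
    (Ici 2 ⊆ HsetPhi G ∧ HsetPhi G ⊆ Ici 1) ∧
    ({1} ∪ Ici 2 ⊆ HsetPsi G ∧ HsetPsi G ⊆ Ici 1) ∧
    (SimpleGraph.cycleGraph 4 ⊑ G → HsetPhi G = Ici 2) := by
  have hone := HsetG_subset_Ici_one hpath
  have htwo := Ici_two_subset_HsetPhi hbip
  exact ⟨hone.antisymm (Ici_one_subset_HsetG hbip), ⟨htwo, HsetPhi_subset_HsetG.trans hone⟩,
    ⟨union_subset (singleton_subset_iff.2 one_mem_HsetPsi) (Ici_two_subset_HsetPsi hbip),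
      HsetPsi_subset_HsetG.trans hone⟩,
    fun hcycle => (HsetPhi_subset_Ici_two hcycle).antisymm htwo⟩

/-- **Theorem 4.10 (bipartite graphs)**: for a connected bipartite graph `G` with at least 3
vertices, `H_G = [1,∞)`, `[2,∞) ⊆ H_G^φ ⊆ [1,∞)` and `{1} ∪ [3,∞) ⊆ H_G^ψ ⊆ [1,∞)`.
If moreover `K_{2,2} ⊆ G ⊆ K_{2,m}` (there are two vertices `a ≠ b` such that every edge of
`G` joins `{a,b}` to its complement, and `G` contains a `K_{2,2}` on `a, b` and two other
vertices), then `H_G^φ = [2,∞)` and `{1} ∪ [2,∞) ⊆ H_G^ψ ⊆ [1,∞)`. -/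
theorem Hsets_bipartite {V : Type*} [Fintype V] [DecidableEq V] (G : SimpleGraph V)
    (hconn : G.Connected) (hbip : G.Colorable 2) (hcard : 3 ≤ Fintype.card V) :
    (HsetG G = Ici (1 : ℝ)) ∧
    (Ici (2 : ℝ) ⊆ HsetPhi G ∧ HsetPhi G ⊆ Ici (1 : ℝ)) ∧
    ({(1 : ℝ)} ∪ Ici (3 : ℝ) ⊆ HsetPsi G ∧ HsetPsi G ⊆ Ici (1 : ℝ)) ∧
    ((∃ a b : V, a ≠ b ∧
        (∀ x y, G.Adj x y → ((x = a ∨ x = b) ↔ ¬(y = a ∨ y = b))) ∧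
        (∃ c d : V, c ≠ d ∧ c ≠ a ∧ c ≠ b ∧ d ≠ a ∧ d ≠ b ∧
          G.Adj a c ∧ G.Adj a d ∧ G.Adj b c ∧ G.Adj b d)) →
      HsetPhi G = Ici (2 : ℝ) ∧
      {(1 : ℝ)} ∪ Ici (2 : ℝ) ⊆ HsetPsi G ∧ HsetPsi G ⊆ Ici (1 : ℝ)) := by
  obtain ⟨hH, hphi, ⟨hpsi, hpsi_one⟩, hcycle⟩ :=
    Hsets_bipartite_general hbip (pathGraph_three_isContained_of_connected hconn hcard)
  refine ⟨hH, hphi, ⟨.trans (by gcongr; norm_num) hpsi, hpsi_one⟩, ?_⟩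
  rintro ⟨a, b, hab, -, c, d, hcd, -, -, -, -, hac, had, hbc, hbd⟩
  exact ⟨hcycle (cycleGraph_four_isContained_of_adj hab hcd hac hbc.symm hbd had.symm), hpsi,
    hpsi_one⟩
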